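/- For every natural number n ≥ 0 and every complex s with 0 < Re(s) < 1, ∫_0^∞ x^{n−2+s} · (d^n/dx^n) ln( x/(1 − e^{−x}) ) dx = (−1)^n Γ(n − 1 + s) ζ(s), where the integrand involves the n-th derivative of the function x ↦ ln( x/(1 − e^{−x}) ) on (0, ∞). -/

import Mathlib

open Complex Real MeasureTheory

open Set Filter Topology Asymptotics

/-!
Write `f x = log (x / (1 - e⁻ˣ))`, so that `f' x = 1 / x - 1 / (eˣ - 1)`. For `1 < re s` the Mellin
transform of `1 / (eˣ - 1)` is `Γ s * ζ s`. Subtracting the singularity `1 / x` at the origin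
continues this identity across the simple pole at `s = 1`: the Mellin transform of `f'` is
`-Γ s * ζ s` in the strip `0 < re s < 1`. Integration by parts links `f⁽ⁿ⁾` at `n - 1 + s` to
`f⁽ⁿ⁺¹⁾` at `n + s`, which gives `n = 0` from `n = 1` and every `n ≥ 2` by induction. The boundary
terms vanish since `f⁽ⁿ⁾ x` is `O(x^(1 - n))` at `0` and `O(x^(-a))` at `∞` for every `a < n`.
-/

theorem tendsto_cpow_mul_of_isBigO_rpow {l : Filter ℝ} {f : ℝ → ℂ} {w : ℂ} {a : ℝ}
    (hl : ∀ᶠ x in l, 0 < x) (hf : f =O[l] (· ^ (-a)))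
    (hlim : Tendsto (fun x : ℝ => x ^ (w.re - a)) l (𝓝 0)) :
    Tendsto (fun x : ℝ => (x : ℂ) ^ w * f x) l (𝓝 0) := by
  have hcpow : (fun x : ℝ => (x : ℂ) ^ w) =O[l] fun x : ℝ => x ^ w.re := by
    refine .of_norm_eventuallyLE ?_
    filter_upwards [hl] with x hx using (norm_cpow_eq_rpow_re_of_pos hx w).le
  refine (hcpow.mul hf).trans_tendsto (hlim.congr' ?_)
  filter_upwards [hl] with x hx
  rw [sub_eq_add_neg, Real.rpow_add hx]

theorem mellin_add_one_of_hasDerivAt {f f' : ℝ → ℂ} {w : ℂ} {a b : ℝ}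
    (hderiv : ∀ x ∈ Ioi (0 : ℝ), HasDerivAt f (f' x) x)
    (htop : f =O[atTop] (· ^ (-a))) (ha : w.re < a)
    (hbot : f =O[𝓝[>] 0] (· ^ (-b))) (hb : b < w.re) (hf' : MellinConvergent f' (w + 1)) :
    mellin f' (w + 1) = -w * mellin f w := by
  have hf : MellinConvergent f w :=
    mellinConvergent_of_isBigO_rpow
      ((HasDerivAt.continuousOn hderiv).locallyIntegrableOn measurableSet_Ioi) htop ha hbot hb
  have hcpow (x : ℝ) (hx : x ∈ Ioi (0 : ℝ)) :
      HasDerivAt (fun t : ℝ => (t : ℂ) ^ w) (w * (x : ℂ) ^ (w - 1)) x := by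
    simpa using ((hasDerivAt_id (x : ℂ)).cpow_const (c := w) (.inl (by simpa using hx))).comp_ofReal
  have hlim_bot : Tendsto (fun x : ℝ => (x : ℂ) ^ w * f x) (𝓝[>] 0) (𝓝 0) := by
    refine tendsto_cpow_mul_of_isBigO_rpow self_mem_nhdsWithin hbot ?_
    have hcont := (Real.continuousAt_rpow_const 0 (w.re - b) (.inr (by linarith))).tendsto
    rw [Real.zero_rpow (by linarith)] at hcont
    exact hcont.mono_left nhdsWithin_le_nhds
  have hlim_top : Tendsto (fun x : ℝ => (x : ℂ) ^ w * f x) atTop (𝓝 0) :=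
    tendsto_cpow_mul_of_isBigO_rpow (eventually_gt_atTop 0) htop
      (by simpa using tendsto_rpow_neg_atTop (sub_pos.2 ha))
  have hparts := integral_Ioi_mul_deriv_eq_deriv_mul hcpow hderiv
    (by simpa [MellinConvergent, Pi.mul_def] using hf')
    (by simpa [MellinConvergent, Pi.mul_def, mul_assoc] using! Integrable.const_mul hf w)
    hlim_bot hlim_top
  simpa [mellin, mul_assoc, integral_const_mul] using hparts

theorem hasMellin_cpow_Ioi_one (c : ℂ) {s : ℂ} (hs : s.re + c.re < 0) :
    HasMellin (indicator (Ioi 1) fun t : ℝ => (t : ℂ) ^ c) s (-1 / (s + c)) := by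
  have hre : (s + c - 1).re < -1 := by
    rw [sub_re, add_re, one_re]
    linarith
  have hind : EqOn ((Ioi (1 : ℝ)).indicator fun t : ℝ => (t : ℂ) ^ (s + c - 1))
      (fun t : ℝ => (t : ℂ) ^ (s - 1) • (Ioi (1 : ℝ)).indicator (fun t : ℝ => (t : ℂ) ^ c) t)
      (Ioi 0) := by
    intro t ht
    have ht0 : (t : ℂ) ≠ 0 := ofReal_ne_zero.2 (ne_of_gt ht)
    by_cases h1 : t ∈ Ioi (1 : ℝ)
    · simp [indicator_of_mem h1, ← cpow_add _ _ ht0, sub_add_eq_add_sub]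
    · simp [indicator_of_notMem h1]
  refine ⟨(((integrableOn_Ioi_cpow_of_lt hre one_pos).integrable_indicator
    measurableSet_Ioi).integrableOn).congr_fun hind measurableSet_Ioi, ?_⟩
  rw [mellin, ← setIntegral_congr_fun measurableSet_Ioi hind,
    setIntegral_indicator measurableSet_Ioi, Ioi_inter_Ioi, sup_of_le_right zero_le_one,
    integral_Ioi_cpow_of_lt hre one_pos]
  simp

/-- The function `G` with the power `A x⁻ᵖ` added on `(1, ∞)` only. If `F x = G x + A x⁻ᵖ`, it
agrees with `G` near `0` and with `F` near `∞`, so that its Mellin transform connects the strips on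
which those of `F` and of `G` converge. -/
noncomputable def addTail (G : ℝ → ℂ) (A p : ℂ) (x : ℝ) : ℂ :=
  G x + A • (Ioi (1 : ℝ)).indicator (fun t : ℝ => (t : ℂ) ^ (-p)) x

section PoleCrossing

variable {F G : ℝ → ℂ} {A p s : ℂ} {a b : ℝ}

theorem locallyIntegrableOn_addTail (hG : LocallyIntegrableOn G (Ioi 0)) :
    LocallyIntegrableOn (addTail G A p) (Ioi 0) := by
  have hcpow : LocallyIntegrableOn (fun t : ℝ => (t : ℂ) ^ (-p)) (Ioi 0) :=
    ContinuousOn.locallyIntegrableOn (fun t ht => (continuousAt_ofReal_cpow_const t (-p)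
      (.inr (ne_of_gt ht))).continuousWithinAt) measurableSet_Ioi
  have htail : LocallyIntegrableOn ((Ioi (1 : ℝ)).indicator fun t : ℝ => (t : ℂ) ^ (-p)) (Ioi 0) :=
    fun x hx => (hcpow x hx).imp fun _ h => ⟨h.1, h.2.indicator measurableSet_Ioi⟩
  exact hG.add (htail.smul A)

theorem addTail_eventuallyEq_nhdsGT_zero : addTail G A p =ᶠ[𝓝[>] 0] G := by
  filter_upwards [Ioo_mem_nhdsGT one_pos] with x hx
  simp [addTail, hx.2.le]

theorem addTail_eventuallyEq_atTop (hFG : ∀ x > 0, F x = G x + A * (x : ℂ) ^ (-p)) :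
    addTail G A p =ᶠ[atTop] F := by
  filter_upwards [eventually_gt_atTop 1] with x hx
  simp [addTail, hx, hFG x (one_pos.trans hx)]

theorem mellinConvergent_addTail (hG : LocallyIntegrableOn G (Ioi 0))
    (hFG : ∀ x > 0, F x = G x + A * (x : ℂ) ^ (-p)) (htop : F =O[atTop] (· ^ (-a)))
    (hbot : G =O[𝓝[>] 0] (· ^ (-b))) (hb : b < s.re) (ha : s.re < a) :
    MellinConvergent (addTail G A p) s :=
  mellinConvergent_of_isBigO_rpow (locallyIntegrableOn_addTail hG)
    ((addTail_eventuallyEq_atTop hFG).trans_isBigO htop) ha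
    (addTail_eventuallyEq_nhdsGT_zero.trans_isBigO hbot) hb

theorem differentiableAt_mellin_addTail (hG : LocallyIntegrableOn G (Ioi 0))
    (hFG : ∀ x > 0, F x = G x + A * (x : ℂ) ^ (-p)) (htop : F =O[atTop] (· ^ (-a)))
    (hbot : G =O[𝓝[>] 0] (· ^ (-b))) (hb : b < s.re) (ha : s.re < a) :
    DifferentiableAt ℂ (mellin (addTail G A p)) s :=
  mellin_differentiableAt_of_isBigO_rpow (locallyIntegrableOn_addTail hG)
    ((addTail_eventuallyEq_atTop hFG).trans_isBigO htop) ha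
    (addTail_eventuallyEq_nhdsGT_zero.trans_isBigO hbot) hb

theorem mellin_eq_mellin_addTail_add (hG : LocallyIntegrableOn G (Ioi 0))
    (hFG : ∀ x > 0, F x = G x + A * (x : ℂ) ^ (-p)) (htop : F =O[atTop] (· ^ (-a)))
    (hbot : G =O[𝓝[>] 0] (· ^ (-b))) (hb : b < s.re) (ha : s.re < a)
    (hp : p.re < s.re) :
    mellin F s = mellin (addTail G A p) s + A / (s - p) := by
  have hpole := hasMellin_cpow_Ioc (-p) (s := s) (by simpa using hp)
  have hsplit : EqOn F (fun x => addTail G A p x +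
      A • (Ioc (0 : ℝ) 1).indicator (fun t : ℝ => (t : ℂ) ^ (-p)) x) (Ioi 0) := by
    intro x hx
    rcases le_or_gt x 1 with h1 | h1
    · simp [addTail, hFG x hx, h1, mem_Ioi.1 hx]
    · simp [addTail, hFG x hx, h1]
  calc mellin F s = mellin (fun x => addTail G A p x +
        A • (Ioc (0 : ℝ) 1).indicator (fun t : ℝ => (t : ℂ) ^ (-p)) x) s :=
        setIntegral_congr_fun measurableSet_Ioi fun x hx => by simp only [hsplit hx]
    _ = mellin (addTail G A p) s + A / (s - p) := by
        rw [(hasMellin_add (mellinConvergent_addTail hG hFG htop hbot hb ha)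
          (hpole.1.const_smul A)).2, mellin_const_smul, hpole.2]
        simp [div_eq_mul_inv, sub_eq_add_neg]

theorem hasMellin_mellin_addTail_add (hG : LocallyIntegrableOn G (Ioi 0))
    (hFG : ∀ x > 0, F x = G x + A * (x : ℂ) ^ (-p)) (htop : F =O[atTop] (· ^ (-a)))
    (hbot : G =O[𝓝[>] 0] (· ^ (-b))) (hb : b < s.re) (ha : s.re < a)
    (hp : s.re < p.re) :
    HasMellin G s (mellin (addTail G A p) s + A / (s - p)) := by
  have htail := hasMellin_cpow_Ioi_one (-p) (s := s) (by simpa using hp)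
  have hsub := hasMellin_sub (mellinConvergent_addTail hG hFG htop hbot hb ha)
    (htail.1.const_smul A)
  simp only [addTail, add_sub_cancel_right] at hsub
  rw [mellin_const_smul, htail.2] at hsub
  simpa only [addTail, smul_eq_mul, neg_div, mul_neg, sub_neg_eq_add, mul_one_div,
    ← sub_eq_add_neg] using hsub

theorem hasMellin_of_mellin_eq_div_sub {Ψ : ℂ → ℂ} (hG : LocallyIntegrableOn G (Ioi 0))
    (hFG : ∀ x > 0, F x = G x + A * (x : ℂ) ^ (-p)) (htop : F =O[atTop] (· ^ (-a)))
    (hbot : G =O[𝓝[>] 0] (· ^ (-b))) (hpa : p.re < a)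
    (hΨ : DifferentiableOn ℂ Ψ {z | b < z.re ∧ z.re < a})
    (hF : ∀ z : ℂ, p.re < z.re → z.re < a → mellin F z = Ψ z / (z - p))
    (hb : b < s.re) (hp : s.re < p.re) : HasMellin G s (Ψ s / (s - p)) := by
  set S : Set ℂ := {z | b < z.re ∧ z.re < a}
  have hopen (c : ℝ) : IsOpen {z : ℂ | c < z.re ∧ z.re < a} :=
    (isOpen_lt continuous_const continuous_re).inter (isOpen_lt continuous_re continuous_const)
  have hconn : IsPreconnected S :=
    ((convex_halfSpace_re_gt b).inter (convex_halfSpace_re_lt a)).isPreconnected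
  have hsub_ne {z : ℂ} (hz : z.re ≠ p.re) : z - p ≠ 0 := fun h => hz (by rw [sub_eq_zero.1 h])
  have hdiff : DifferentiableOn ℂ (fun z => (z - p) * mellin (addTail G A p) z + A) S :=
    fun z hz => (((differentiableAt_id.sub_const p).mul
      (differentiableAt_mellin_addTail hG hFG htop hbot hz.1 hz.2)).add_const A
      ).differentiableWithinAt
  obtain ⟨σ, hpσ, hσa⟩ := exists_between hpa
  have heq : EqOn (fun z => (z - p) * mellin (addTail G A p) z + A) Ψ S := by
    refine (hdiff.analyticOnNhd (hopen b)).eqOn_of_preconnected_of_eventuallyEq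
      (hΨ.analyticOnNhd (hopen b)) hconn (z₀ := σ)
      ⟨by simpa using (hb.trans hp).trans hpσ, by simpa using hσa⟩ ?_
    filter_upwards [(hopen p.re).mem_nhds (x := (σ : ℂ)) (by simpa using ⟨hpσ, hσa⟩)] with z hz
    have hmellin := hF z hz.1 hz.2
    rw [mellin_eq_mellin_addTail_add hG hFG htop hbot ((hb.trans hp).trans hz.1) hz.2 hz.1]
      at hmellin
    field_simp [hsub_ne hz.1.ne'] at hmellin
    linear_combination hmellin
  have hval := heq ⟨hb, hp.trans hpa⟩
  have hres := hasMellin_mellin_addTail_add hG hFG htop hbot hb (hp.trans hpa) hp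
  rwa [← hval, add_div, mul_div_cancel_left₀ _ (hsub_ne hp.ne)]

end PoleCrossing

theorem analyticAt_dslope {𝕜 E : Type*} [NontriviallyNormedField 𝕜] [NormedAddCommGroup E]
    [NormedSpace 𝕜 E] {f : 𝕜 → E} {x : 𝕜} (hf : AnalyticAt 𝕜 f x) (a : 𝕜) :
    AnalyticAt 𝕜 (dslope f a) x := by
  rcases eq_or_ne x a with rfl | hxa
  · obtain ⟨_, hp⟩ := hf
    exact ⟨_, hp.has_fpower_series_dslope_fslope⟩
  · have hslope : AnalyticAt 𝕜 (fun y => (y - a)⁻¹ • (f y - f a)) x :=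
      ((analyticAt_id.sub analyticAt_const).inv (sub_ne_zero.2 hxa)).smul (hf.sub analyticAt_const)
    exact hslope.congr (dslope_eventuallyEq_slope_of_ne f hxa).symm

theorem hasDerivAt_iteratedDeriv {𝕜 E : Type*} [NontriviallyNormedField 𝕜] [NormedAddCommGroup E]
    [NormedSpace 𝕜 E] {f : 𝕜 → E} {n : ℕ} (hf : ContDiff 𝕜 (n + 1) f) (x : 𝕜) :
    HasDerivAt (iteratedDeriv n f) (iteratedDeriv (n + 1) f x) x := by
  rw [iteratedDeriv_succ]
  exact (hf.differentiable_iteratedDeriv' n x).hasDerivAt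

/-- The Bose–Einstein kernel `1 / (eˣ - 1)`, whose Mellin transform is `Γ ζ`. -/
noncomputable def boseEinstein (x : ℝ) : ℝ :=
  (Real.exp x - 1)⁻¹

theorem exp_sub_one_ne_zero_of_ne_zero {x : ℝ} (hx : x ≠ 0) : Real.exp x - 1 ≠ 0 :=
  sub_ne_zero.2 (mt (Real.exp_eq_one_iff x).1 hx)

theorem hasDerivAt_boseEinstein {x : ℝ} (hx : x ≠ 0) :
    HasDerivAt boseEinstein (-(boseEinstein x + boseEinstein x ^ 2)) x := by
  have hne := exp_sub_one_ne_zero_of_ne_zero hx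
  convert! ((Real.hasDerivAt_exp x).sub_const 1).inv hne using 1
  rw [boseEinstein]
  field_simp
  ring

theorem contDiffAt_boseEinstein {n : WithTop ℕ∞} {x : ℝ} (hx : x ≠ 0) :
    ContDiffAt ℝ n boseEinstein x :=
  (Real.contDiff_exp.contDiffAt.sub contDiffAt_const).inv (exp_sub_one_ne_zero_of_ne_zero hx)

theorem iteratedDeriv_boseEinstein_eq_mul_eval (n : ℕ) :
    ∃ Q : Polynomial ℝ, ∀ x ≠ 0,
      iteratedDeriv n boseEinstein x = boseEinstein x * Q.eval (boseEinstein x) := by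
  induction n with
  | zero => exact ⟨1, by simp⟩
  | succ n ih =>
    obtain ⟨Q, hQ⟩ := ih
    refine ⟨-(1 + .X) * (Q + .X * Q.derivative), fun x hx => ?_⟩
    have hloc : iteratedDeriv n boseEinstein =ᶠ[𝓝 x]
        boseEinstein * (fun y => Q.eval y) ∘ boseEinstein := by
      filter_upwards [isOpen_ne.mem_nhds hx] with y hy using hQ y hy
    have hbose := hasDerivAt_boseEinstein hx
    rw [iteratedDeriv_succ, hloc.deriv_eq,
      (hbose.mul ((Q.hasDerivAt (boseEinstein x)).comp x hbose)).deriv]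
    simp only [Function.comp_apply, Polynomial.eval_mul, Polynomial.eval_neg, Polynomial.eval_add,
      Polynomial.eval_one, Polynomial.eval_X]
    ring

theorem boseEinstein_isBigO_exp_neg : boseEinstein =O[atTop] fun x => Real.exp (-x) := by
  refine .of_bound 2 ?_
  filter_upwards [eventually_ge_atTop 1] with x hx
  have hexp : 2 ≤ Real.exp x := by linarith [Real.add_one_le_exp x]
  rw [boseEinstein, norm_inv, Real.norm_of_nonneg (by linarith),
    Real.norm_of_nonneg (Real.exp_nonneg _), Real.exp_neg, ← div_eq_mul_inv, inv_eq_one_div,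
    div_le_div_iff₀ (by linarith) (by linarith)]
  linarith

theorem iteratedDeriv_boseEinstein_isBigO_rpow (n : ℕ) (r : ℝ) :
    iteratedDeriv n boseEinstein =O[atTop] (· ^ r) := by
  obtain ⟨Q, hQ⟩ := iteratedDeriv_boseEinstein_eq_mul_eval n
  have hlim : Tendsto boseEinstein atTop (𝓝 0) :=
    boseEinstein_isBigO_exp_neg.trans_tendsto Real.tendsto_exp_neg_atTop_nhds_zero
  have hexp : (fun x => Real.exp (-x)) =O[atTop] fun x : ℝ => x ^ r := by
    simpa using (isLittleO_exp_neg_mul_rpow_atTop one_pos r).isBigO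
  have hmul := (boseEinstein_isBigO_exp_neg.trans hexp).mul
    (((Q.continuous.tendsto 0).comp hlim).isBigO_one ℝ)
  refine .congr' hmul ?_ (.of_eq (by simp))
  filter_upwards [eventually_ne_atTop 0] with x hx using (hQ x hx).symm

theorem hasSum_exp_neg_add_one_mul {x : ℝ} (hx : 0 < x) :
    HasSum (fun n : ℕ => Real.exp (-(n + 1) * x)) (boseEinstein x) := by
  have hgeom := (hasSum_geometric_of_lt_one (Real.exp_nonneg (-x))
    (Real.exp_lt_one_iff.2 (neg_lt_zero.2 hx))).mul_left (Real.exp (-x))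
  have hsum : Real.exp (-x) * (1 - Real.exp (-x))⁻¹ = boseEinstein x := by
    rw [boseEinstein, Real.exp_neg, ← mul_inv, mul_sub, mul_one,
      mul_inv_cancel₀ (Real.exp_ne_zero x)]
  rw [hsum] at hgeom
  refine hgeom.congr_fun fun n => ?_
  rw [← Real.exp_nat_mul, ← Real.exp_add]
  ring_nf

theorem mellin_boseEinstein {s : ℂ} (hs : 1 < s.re) :
    mellin (fun x => (boseEinstein x : ℂ)) s = Complex.Gamma s * riemannZeta s := by
  have hsum := hasSum_mellin (a := fun _ : ℕ => 1) (p := fun n : ℕ => (n : ℝ) + 1)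
    (F := fun x => (boseEinstein x : ℂ)) (s := s) (fun n => .inr (by positivity))
    (one_pos.trans hs)
    (fun x hx => by simpa using hasSum_ofReal.2 (hasSum_exp_neg_add_one_mul hx))
    (by simpa using (summable_nat_add_iff 1).2 (Real.summable_one_div_nat_rpow.2 hs))
  rw [← hsum.tsum_eq, zeta_eq_tsum_one_div_nat_add_one_cpow hs, ← tsum_mul_left]
  simp [div_eq_mul_inv]

/-- The logarithm of the Todd function `x / (1 - e⁻ˣ)`. At `x = 0` the conventions `0 / 0 = 0` and
`log 0 = 0` give `0`, which is also the value of its analytic extension. -/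
noncomputable def logTodd (x : ℝ) : ℝ :=
  Real.log (x / (1 - Real.exp (-x)))

theorem hasDerivAt_one_sub_exp_neg (x : ℝ) :
    HasDerivAt (fun t : ℝ => 1 - Real.exp (-t)) (Real.exp (-x)) x := by
  simpa using (hasDerivAt_neg x).exp.const_sub 1

theorem dslope_one_sub_exp_neg_pos (x : ℝ) : 0 < dslope (fun t : ℝ => 1 - Real.exp (-t)) 0 x := by
  rcases eq_or_ne x 0 with rfl | hx
  · simp [dslope_same, (hasDerivAt_one_sub_exp_neg 0).deriv]
  · rw [dslope_of_ne _ hx]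
    have hmono : StrictMono fun t : ℝ => 1 - Real.exp (-t) := fun _ _ h => by simpa using h
    exact (hmono.strictMonoOn univ).slope_pos (mem_univ _) (mem_univ _) hx.symm

theorem logTodd_eq_neg_log_dslope :
    logTodd = fun x => -Real.log (dslope (fun t : ℝ => 1 - Real.exp (-t)) 0 x) := by
  funext x
  rcases eq_or_ne x 0 with rfl | hx
  · simp [logTodd, dslope_same, (hasDerivAt_one_sub_exp_neg 0).deriv]
  · simp [logTodd, dslope_of_ne _ hx, slope_def_field, ← Real.log_inv]

theorem contDiff_logTodd {n : WithTop ℕ∞} : ContDiff ℝ n logTodd := by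
  rw [logTodd_eq_neg_log_dslope, contDiff_iff_contDiffAt]
  intro x
  have han : AnalyticAt ℝ (fun t : ℝ => 1 - Real.exp (-t)) x := by fun_prop
  exact ((analyticAt_dslope han 0).log (dslope_one_sub_exp_neg_pos x)).neg.contDiffAt

theorem continuous_iteratedDeriv_logTodd (n : ℕ) : Continuous (iteratedDeriv n logTodd) :=
  contDiff_logTodd.continuous_iteratedDeriv n le_rfl

theorem deriv_logTodd {x : ℝ} (hx : x ≠ 0) : deriv logTodd x = x⁻¹ - boseEinstein x := by
  have hne : 1 - Real.exp (-x) ≠ 0 := by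
    simpa using neg_ne_zero.2 (exp_sub_one_ne_zero_of_ne_zero (neg_ne_zero.2 hx))
  have hexp := exp_sub_one_ne_zero_of_ne_zero hx
  have hderiv : HasDerivAt logTodd _ x :=
    ((hasDerivAt_id x).div (hasDerivAt_one_sub_exp_neg x) hne).log (div_ne_zero hx hne)
  rw [hderiv.deriv, boseEinstein]
  simp only [id, Pi.div_apply, Real.exp_neg]
  field_simp

theorem iteratedDeriv_succ_logTodd (n : ℕ) {x : ℝ} (hx : x ≠ 0) :
    iteratedDeriv (n + 1) logTodd x =
      (-1) ^ n * n.factorial * x ^ (-1 - n : ℤ) - iteratedDeriv n boseEinstein x := by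
  have hloc : deriv logTodd =ᶠ[𝓝 x] Inv.inv - boseEinstein := by
    filter_upwards [isOpen_ne.mem_nhds hx] with y hy using deriv_logTodd hy
  rw [iteratedDeriv_succ', hloc.iteratedDeriv_eq,
    iteratedDeriv_sub (contDiffAt_inv ℝ hx) (contDiffAt_boseEinstein hx),
    iteratedDeriv_eq_iterate, iter_deriv_inv]

theorem isBigO_rpow_rpow_atTop {p q : ℝ} (h : p ≤ q) :
    (fun x : ℝ => x ^ p) =O[atTop] fun x : ℝ => x ^ q := by
  refine .of_norm_eventuallyLE ?_
  filter_upwards [eventually_ge_atTop 1] with x hx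
  rw [Real.norm_of_nonneg (by positivity)]
  exact Real.rpow_le_rpow_of_exponent_le hx h

theorem logTodd_isBigO_rpow_atTop {ε : ℝ} (hε : 0 < ε) : logTodd =O[atTop] (· ^ ε) := by
  have hlog : Tendsto (fun x => Real.log (1 - Real.exp (-x))) atTop (𝓝 (Real.log (1 - 0))) :=
    (tendsto_const_nhds.sub Real.tendsto_exp_neg_atTop_nhds_zero).log (by norm_num)
  have hone : (fun _ : ℝ => (1 : ℝ)) =O[atTop] fun x : ℝ => x ^ ε := by
    simpa using isBigO_rpow_rpow_atTop hε.le
  refine .congr' ((isLittleO_log_rpow_atTop hε).isBigO.sub ((hlog.isBigO_one ℝ).trans hone)) ?_ .rfl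
  filter_upwards [eventually_gt_atTop 0] with x hx
  rw [logTodd, Real.log_div hx.ne' (sub_pos.2 (Real.exp_lt_one_iff.2 (neg_lt_zero.2 hx))).ne']

theorem iteratedDeriv_logTodd_isBigO_rpow_atTop (n : ℕ) {a : ℝ} (ha : a < n) :
    iteratedDeriv n logTodd =O[atTop] (· ^ (-a)) := by
  rcases n with _ | n
  · simpa using logTodd_isBigO_rpow_atTop (neg_pos.2 (by simpa using ha))
  · have hzpow : (fun x : ℝ => x ^ (-1 - n : ℤ)) =O[atTop] fun x : ℝ => x ^ (-a) := by
      push_cast at ha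
      simpa [← Real.rpow_intCast] using isBigO_rpow_rpow_atTop (p := -1 - n) (q := -a) (by linarith)
    refine .congr' ((hzpow.const_mul_left ((-1) ^ n * n.factorial)).sub
      (iteratedDeriv_boseEinstein_isBigO_rpow n (-a))) ?_ .rfl
    filter_upwards [eventually_ne_atTop 0] with x hx using (iteratedDeriv_succ_logTodd n hx).symm

theorem iteratedDeriv_logTodd_isBigO_rpow_nhdsGT_zero (n : ℕ) :
    iteratedDeriv n logTodd =O[𝓝[>] 0] fun x : ℝ => x ^ (-(n - 1 : ℝ)) := by
  rcases n with _ | n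
  · have hdiff := (contDiff_logTodd (n := 1)).differentiable one_ne_zero 0
    have hzero : logTodd 0 = 0 := by simp [logTodd]
    simpa [hzero] using hdiff.hasDerivAt.isBigO_sub.mono nhdsWithin_le_nhds
  · have hbdd : iteratedDeriv (n + 1) logTodd =O[𝓝[>] 0] fun _ => (1 : ℝ) :=
      (((continuous_iteratedDeriv_logTodd (n + 1)).tendsto 0).isBigO_one ℝ).mono nhdsWithin_le_nhds
    refine hbdd.trans (.of_norm_eventuallyLE ?_)
    filter_upwards [Ioo_mem_nhdsGT one_pos] with x hx
    simpa using Real.one_le_rpow_of_pos_of_le_one_of_nonpos hx.1 hx.2.le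
      (neg_nonpos.2 n.cast_nonneg)

theorem mellinConvergent_iteratedDeriv_logTodd {n : ℕ} {w : ℂ} (hbot : n - 1 < w.re)
    (htop : w.re < n) : MellinConvergent (fun x => ((iteratedDeriv n logTodd x : ℝ) : ℂ)) w := by
  obtain ⟨a, hwa, han⟩ := exists_between htop
  exact mellinConvergent_of_isBigO_rpow
    ((continuous_ofReal.comp (continuous_iteratedDeriv_logTodd n)).continuousOn.locallyIntegrableOn
      measurableSet_Ioi)
    (isBigO_ofReal_left.2 (iteratedDeriv_logTodd_isBigO_rpow_atTop n han)) hwa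
    (isBigO_ofReal_left.2 (iteratedDeriv_logTodd_isBigO_rpow_nhdsGT_zero n)) hbot

theorem mellin_iteratedDeriv_succ_logTodd {n : ℕ} {w : ℂ} (hbot : n - 1 < w.re)
    (htop : w.re < n) :
    mellin (fun x => ((iteratedDeriv (n + 1) logTodd x : ℝ) : ℂ)) (w + 1) =
      -w * mellin (fun x => ((iteratedDeriv n logTodd x : ℝ) : ℂ)) w := by
  obtain ⟨a, hwa, han⟩ := exists_between htop
  exact mellin_add_one_of_hasDerivAt
    (fun x _ => (hasDerivAt_iteratedDeriv contDiff_logTodd x).ofReal_comp)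
    (isBigO_ofReal_left.2 (iteratedDeriv_logTodd_isBigO_rpow_atTop n han)) hwa
    (isBigO_ofReal_left.2 (iteratedDeriv_logTodd_isBigO_rpow_nhdsGT_zero n)) hbot
    (mellinConvergent_iteratedDeriv_logTodd (by simpa [sub_lt_iff_lt_add] using hbot)
      (by simpa using htop))

theorem differentiableOn_Gamma_mul_riemannZeta₁ :
    DifferentiableOn ℂ (fun z => Complex.Gamma z * riemannZeta₁ z) {z | 0 < z.re} := by
  intro z hz
  have hpole (m : ℕ) : z ≠ -m := by
    rintro rfl
    exact (show (0 : ℝ) < (-(m : ℂ)).re from hz).not_ge (by simp)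
  exact ((differentiableAt_Gamma z hpole).mul
    (differentiable_riemannZeta₁ z)).differentiableWithinAt

theorem hasMellin_deriv_logTodd {s : ℂ} (h0 : 0 < s.re) (h1 : s.re < 1) :
    HasMellin (fun x => ((deriv logTodd x : ℝ) : ℂ)) s (-(Complex.Gamma s * riemannZeta s)) := by
  have hcont : Continuous (deriv logTodd) := contDiff_logTodd.continuous_deriv le_rfl
  have hne {z : ℂ} (hz : z.re ≠ 1) : z ≠ 1 := fun h => hz (by simp [h])
  have hzeta {z : ℂ} (hz : z.re ≠ 1) :
      Complex.Gamma z * riemannZeta₁ z / (z - 1) = Complex.Gamma z * riemannZeta z := by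
    rw [riemannZeta_eq_inv_sub_mul (hne hz)]
    ring
  have hbot : (fun x => -((deriv logTodd x : ℝ) : ℂ)) =O[𝓝[>] 0] fun x : ℝ => x ^ (-0 : ℝ) := by
    simpa using (((continuous_ofReal.comp hcont).neg.tendsto 0).isBigO_one ℝ).mono
      nhdsWithin_le_nhds
  have htop : (fun x => (boseEinstein x : ℂ)) =O[atTop] fun x : ℝ => x ^ (-2 : ℝ) :=
    isBigO_ofReal_left.2 (by simpa using iteratedDeriv_boseEinstein_isBigO_rpow 0 (-2))
  have hneg := hasMellin_of_mellin_eq_div_sub (A := 1) (p := 1) (s := s)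
    (Ψ := fun z => Complex.Gamma z * riemannZeta₁ z)
    ((continuous_ofReal.comp hcont).neg.continuousOn.locallyIntegrableOn measurableSet_Ioi)
    (fun x hx => by simp [deriv_logTodd hx.ne', cpow_neg_one]) htop hbot (by simp)
    (differentiableOn_Gamma_mul_riemannZeta₁.mono fun z hz => hz.1)
    (fun z hz _ => by rw [mellin_boseEinstein hz, hzeta (ne_of_gt hz)])
    h0 (by simpa using h1)
  have hpos := hasMellin_const_smul hneg.1 (-1 : ℂ)
  rw [hneg.2, hzeta h1.ne] at hpos
  simpa using hpos

theorem mellin_iteratedDeriv_logTodd (n : ℕ) {s : ℂ} (h0 : 0 < s.re) (h1 : s.re < 1) :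
    mellin (fun x => ((iteratedDeriv n logTodd x : ℝ) : ℂ)) (n - 1 + s) =
      (-1) ^ n * Complex.Gamma (n - 1 + s) * riemannZeta s := by
  have hne (n : ℕ) : (n - 1 + s : ℂ) ≠ 0 := by
    intro h
    have hre : (n : ℝ) - 1 + s.re = 0 := by simpa using congrArg re h
    rcases n with _ | n
    · norm_num at hre
      linarith
    · push_cast at hre
      linarith [n.cast_nonneg (α := ℝ)]
  have hstep (n : ℕ) :
      mellin (fun x => ((iteratedDeriv (n + 1) logTodd x : ℝ) : ℂ)) (n + s) =
        -(n - 1 + s) * mellin (fun x => ((iteratedDeriv n logTodd x : ℝ) : ℂ)) (n - 1 + s) := by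
    rw [← mellin_iteratedDeriv_succ_logTodd (by simpa using h0) (by simp; linarith)]
    ring_nf
  have hGamma (n : ℕ) : Complex.Gamma (n + s) = (n - 1 + s) * Complex.Gamma (n - 1 + s) := by
    rw [← Complex.Gamma_add_one _ (hne n)]
    ring_nf
  induction n with
  | zero =>
    refine mul_left_cancel₀ (neg_ne_zero.2 (hne 0)) ?_
    have hone := (hasMellin_deriv_logTodd h0 h1).2
    have hΓ := hGamma 0
    rw [← iteratedDeriv_one] at hone
    simp only [Nat.cast_zero, zero_add] at hΓ
    rw [← hstep 0]
    simp only [Nat.cast_zero, zero_add, hone, hΓ]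
    ring
  | succ n ih =>
    have hcast : ((n + 1 : ℕ) - 1 + s : ℂ) = n + s := by push_cast; ring
    rw [hcast, hstep, ih, hGamma]
    ring

theorem integral_iteratedDeriv_log_zeta (n : ℕ) (s : ℂ) (h0 : 0 < s.re) (h1 : s.re < 1) :
    ∫ x in Set.Ioi (0 : ℝ),
        (x : ℂ) ^ ((n : ℂ) - 2 + s) *
          ((iteratedDeriv n (fun t : ℝ => Real.log (t / (1 - Real.exp (-t)))) x : ℝ) : ℂ) =
      (-1 : ℂ) ^ n * Complex.Gamma ((n : ℂ) - 1 + s) * riemannZeta s := by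
  have hexp : (n : ℂ) - 2 + s = n - 1 + s - 1 := by ring
  rw [hexp]
  exact mellin_iteratedDeriv_logTodd n h0 h1
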